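/- Fix d ≥ 1, 0 ≤ r ≤ d−1 and n ≥ 3, and set K = K_d(n). Define the subgroups H_r = K ∩ P_r(ℚ)Q_r(𝔸_f), H_{ℓ,r} = K ∩ L_{ℓ,r}(ℚ)N_r(𝔸_f), K_{Q,r} = K ∩ Q_r(𝔸_f) and K_{N,r} = K ∩ N_r(𝔸_f) of GSp_{2d}(𝔸_f). Then: (a) H_r = H_{ℓ,r}·K_{Q,r}; (b) K_{N,r} is a normal subgroup of H_r and the quotient H_r/K_{N,r} is isomorphic to the direct product Γ_{ℓ,r} × K_r, where Γ_{ℓ,r} = Ker(GL_{d−r}(ℤ) → GL_{d−r}(ℤ/nℤ)) (identified with a subgroup of L_{ℓ,r}(ℚ) via A ↦ blockdiag(A, I_{2r}, J_{d−r}·(ᵗA)^{−1}·J_{d−r})) and K_r = Ker(GSp_{2r}(Ẑ) → GSp_{2r}(ℤ/nℤ)). -/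

import Mathlib

open Matrix
open scoped TensorProduct

noncomputable section

/-- The profinite completion `Ẑ` of `ℤ`, as the inverse limit of the rings `ℤ/nℤ`. -/
def ZHat : Subring (∀ n : ℕ+, ZMod (n : ℕ)) where
  carrier := {x | ∀ (m k : ℕ+) (h : (m : ℕ) ∣ (k : ℕ)), ZMod.castHom h (ZMod (m : ℕ)) (x k) = x m}
  zero_mem' := by intro m k h; simp only [Pi.zero_apply, _root_.map_zero]
  one_mem' := by intro m k h; simp only [Pi.one_apply, _root_.map_one]
  add_mem' := by intro a b ha hb m k h; simp only [Pi.add_apply, _root_.map_add, ha m k h, hb m k h]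
  mul_mem' := by intro a b ha hb m k h; simp only [Pi.mul_apply, _root_.map_mul, ha m k h, hb m k h]
  neg_mem' := by intro a ha m k h; simp only [Pi.neg_apply, _root_.map_neg, ha m k h]

/-- Reduction modulo `n`, as a ring homomorphism `Ẑ → ℤ/nℤ`. -/
def projZHat (n : ℕ+) : ↥ZHat →+* ZMod (n : ℕ) :=
  (Pi.evalRingHom (fun k : ℕ+ => ZMod (k : ℕ)) n).comp ZHat.subtype

/-- The ring of finite adeles of `ℚ`, presented as `Ẑ ⊗_ℤ ℚ`. -/
abbrev AQf : Type := ↥ZHat ⊗[ℤ] ℚ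

/-- The inclusion `Ẑ → 𝔸_f`. -/
def zhatToA : ↥ZHat →+* AQf := Algebra.TensorProduct.includeLeftRingHom

/-- The diagonal inclusion `ℚ → 𝔸_f`. -/
def ratToA : ℚ →+* AQf := (Algebra.TensorProduct.includeRight).toRingHom

/-- Functoriality of `GL_m` in the ring. -/
def glMap {m : ℕ} {R S : Type*} [CommRing R] [CommRing S] (f : R →+* S) :
    GL (Fin m) R →* GL (Fin m) S :=
  Units.map (f.mapMatrix : Matrix (Fin m) (Fin m) R →+* Matrix (Fin m) (Fin m) S).toMonoidHom

/-- The `d × d` antidiagonal matrix `J_d`. -/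
def Jmat (d : ℕ) (R : Type*) [CommRing R] : Matrix (Fin d) (Fin d) R :=
  Matrix.of fun i j => if (i : ℕ) + (j : ℕ) + 1 = d then 1 else 0

/-- The standard symplectic similitude form `J_{d,d} = [[0, J_d], [-J_d, 0]]`. -/
def Jsymp (d : ℕ) (R : Type*) [CommRing R] : Matrix (Fin (2 * d)) (Fin (2 * d)) R :=
  Matrix.of fun i j =>
    if (i : ℕ) + (j : ℕ) + 1 = 2 * d then (if (i : ℕ) < d then 1 else -1) else 0

private lemma conj_aux {n : ℕ} {R : Type*} [CommRing R]
    (A B J : Matrix (Fin n) (Fin n) R) :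
    Bᵀ * (Aᵀ * J * A) * B = (A * B)ᵀ * J * (A * B) := by
  simp only [Matrix.transpose_mul, Matrix.mul_assoc]

/-- The symplectic similitude group `GSp_{2d}(R)`, with the similitude factor recorded:
pairs `(g, c)` with `ᵗg · J_{d,d} · g = c · J_{d,d}`.  For `d ≥ 1` the similitude `c` is
uniquely determined by `g`. -/
def GSpP (d : ℕ) (R : Type*) [CommRing R] : Subgroup (GL (Fin (2 * d)) R × Rˣ) where
  carrier := {x | ((x.1 : Matrix (Fin (2 * d)) (Fin (2 * d)) R))ᵀ * Jsymp d R *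
      (x.1 : Matrix (Fin (2 * d)) (Fin (2 * d)) R) = ((x.2 : Rˣ) : R) • Jsymp d R}
  one_mem' := by
    simp only [Set.mem_setOf_eq, Prod.fst_one, Prod.snd_one, Units.val_one, one_smul]
    simp
  mul_mem' := by
    intro a b ha hb
    simp only [Set.mem_setOf_eq] at ha hb ⊢
    have h1 : ((a * b).1 : Matrix (Fin (2 * d)) (Fin (2 * d)) R)
        = (a.1 : Matrix (Fin (2 * d)) (Fin (2 * d)) R) *
          (b.1 : Matrix (Fin (2 * d)) (Fin (2 * d)) R) := rfl
    have h2 : (((a * b).2 : Rˣ) : R) = ((a.2 : Rˣ) : R) * ((b.2 : Rˣ) : R) := rfl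
    rw [h1, h2, ← conj_aux, ha, Matrix.mul_smul, Matrix.smul_mul, hb, smul_smul]
  inv_mem' := by
    intro a ha
    simp only [Set.mem_setOf_eq] at ha ⊢
    have h1 : ((a⁻¹).1 : Matrix (Fin (2 * d)) (Fin (2 * d)) R)
        = (((a.1)⁻¹ : GL (Fin (2 * d)) R) : Matrix (Fin (2 * d)) (Fin (2 * d)) R) := rfl
    have h2 : (((a⁻¹).2 : Rˣ) : R) = (((a.2)⁻¹ : Rˣ) : R) := rfl
    have hJ : Jsymp d R = (((a.2)⁻¹ : Rˣ) : R) •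
        ((a.1 : Matrix (Fin (2 * d)) (Fin (2 * d)) R)ᵀ * Jsymp d R *
          (a.1 : Matrix (Fin (2 * d)) (Fin (2 * d)) R)) := by
      rw [ha, smul_smul, ← Units.val_mul, inv_mul_cancel, Units.val_one, one_smul]
    rw [h1, h2]
    conv_lhs => rw [hJ]
    rw [Matrix.mul_smul, Matrix.smul_mul, conj_aux, Units.mul_inv]
    simp

/-- The symplectic similitude group `GSp_{2d}(R)` as a matrix group. -/
def GSp (d : ℕ) (R : Type*) [CommRing R] : Subgroup (GL (Fin (2 * d)) R) :=
  (GSpP d R).map (MonoidHom.fst _ _)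

/-- Index of the block (of sizes `d-r`, `2r`, `d-r`) that the `i`-th coordinate belongs to. -/
def blk (d r : ℕ) (i : ℕ) : ℕ := if i < d - r then 0 else if i < d + r then 1 else 2

/-- The standard maximal parabolic subgroup `P_r` of `GSp_{2d}`:
elements of `GSp_{2d}` that are block upper triangular for the partition `(d-r, 2r, d-r)`. -/
def PrSet (d r : ℕ) (R : Type*) [CommRing R] : Set (GL (Fin (2 * d)) R) :=
  {g | g ∈ GSp d R ∧
    ∀ i j : Fin (2 * d), blk d r (j : ℕ) < blk d r (i : ℕ) →
      (g : Matrix (Fin (2 * d)) (Fin (2 * d)) R) i j = 0}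

/-- The unipotent radical `N_r` of `P_r`: block upper triangular elements of `GSp_{2d}`
whose diagonal blocks are identity matrices. -/
def NrSet (d r : ℕ) (R : Type*) [CommRing R] : Set (GL (Fin (2 * d)) R) :=
  {g | g ∈ GSp d R ∧
    (∀ i j : Fin (2 * d), blk d r (j : ℕ) < blk d r (i : ℕ) →
      (g : Matrix (Fin (2 * d)) (Fin (2 * d)) R) i j = 0) ∧
    (∀ i j : Fin (2 * d), blk d r (i : ℕ) = blk d r (j : ℕ) →
      (g : Matrix (Fin (2 * d)) (Fin (2 * d)) R) i j = if i = j then 1 else 0)}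

/-- The subgroup `Q_r` of `P_r`: block upper triangular elements of `GSp_{2d}` with
last diagonal block the identity and first diagonal block the similitude times the identity. -/
def QrSet (d r : ℕ) (R : Type*) [CommRing R] : Set (GL (Fin (2 * d)) R) :=
  {g | ∃ c : Rˣ,
    (g : Matrix (Fin (2 * d)) (Fin (2 * d)) R)ᵀ * Jsymp d R *
      (g : Matrix (Fin (2 * d)) (Fin (2 * d)) R) = (c : R) • Jsymp d R ∧
    (∀ i j : Fin (2 * d), blk d r (j : ℕ) < blk d r (i : ℕ) →
      (g : Matrix (Fin (2 * d)) (Fin (2 * d)) R) i j = 0) ∧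
    (∀ i j : Fin (2 * d), blk d r (i : ℕ) = 0 → blk d r (j : ℕ) = 0 →
      (g : Matrix (Fin (2 * d)) (Fin (2 * d)) R) i j = if i = j then (c : R) else 0) ∧
    (∀ i j : Fin (2 * d), blk d r (i : ℕ) = 2 → blk d r (j : ℕ) = 2 →
      (g : Matrix (Fin (2 * d)) (Fin (2 * d)) R) i j = if i = j then 1 else 0)}

/-- The linear part `L_{ℓ,r}` of the Levi quotient of `P_r`: block diagonal symplectic
(similitude `1`) matrices with middle block the identity. -/
def LlrSet (d r : ℕ) (R : Type*) [CommRing R] : Set (GL (Fin (2 * d)) R) :=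
  {g | (g : Matrix (Fin (2 * d)) (Fin (2 * d)) R)ᵀ * Jsymp d R *
      (g : Matrix (Fin (2 * d)) (Fin (2 * d)) R) = Jsymp d R ∧
    (∀ i j : Fin (2 * d), blk d r (i : ℕ) ≠ blk d r (j : ℕ) →
      (g : Matrix (Fin (2 * d)) (Fin (2 * d)) R) i j = 0) ∧
    (∀ i j : Fin (2 * d), blk d r (i : ℕ) = 1 → blk d r (j : ℕ) = 1 →
      (g : Matrix (Fin (2 * d)) (Fin (2 * d)) R) i j = if i = j then 1 else 0)}

/-- `P_r(ℚ)`, viewed inside `GL_{2d}(𝔸_f)`. -/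
def PrQinA (d r : ℕ) : Set (GL (Fin (2 * d)) AQf) := (glMap ratToA) '' (PrSet d r ℚ)

/-- `L_{ℓ,r}(ℚ)`, viewed inside `GL_{2d}(𝔸_f)`. -/
def LlrQinA (d r : ℕ) : Set (GL (Fin (2 * d)) AQf) := (glMap ratToA) '' (LlrSet d r ℚ)

/-- `GSp_{2d}(Ẑ)`, viewed inside `GL_{2d}(𝔸_f)`. -/
def GSpZinA (d : ℕ) : Subgroup (GL (Fin (2 * d)) AQf) := (GSp d ↥ZHat).map (glMap zhatToA)

/-- The principal congruence subgroup `K_d(n) = Ker(GSp_{2d}(Ẑ) → GSp_{2d}(ℤ/nℤ))`. -/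
def KdZ (d : ℕ) (n : ℕ+) : Subgroup (GL (Fin (2 * d)) ↥ZHat) :=
  GSp d ↥ZHat ⊓ (glMap (projZHat n)).ker

/-- The principal congruence subgroup `K_d(n)`, viewed inside `GL_{2d}(𝔸_f)`. -/
def KdA (d : ℕ) (n : ℕ+) : Subgroup (GL (Fin (2 * d)) AQf) := (KdZ d n).map (glMap zhatToA)
set_option synthInstance.maxHeartbeats 2000000
set_option maxHeartbeats 2000000

/-- `H_r = K ∩ P_r(ℚ)Q_r(𝔸_f)`. -/
def HrSet (d r : ℕ) (n : ℕ+) : Set (GL (Fin (2 * d)) AQf) :=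
  {g | g ∈ KdA d n ∧ ∃ p ∈ PrQinA d r, ∃ q ∈ QrSet d r AQf, g = p * q}

/-- `H_{ℓ,r} = K ∩ L_{ℓ,r}(ℚ)N_r(𝔸_f)`. -/
def HlrSet (d r : ℕ) (n : ℕ+) : Set (GL (Fin (2 * d)) AQf) :=
  {g | g ∈ KdA d n ∧ ∃ p ∈ LlrQinA d r, ∃ u ∈ NrSet d r AQf, g = p * u}

/-- `K_{Q,r} = K ∩ Q_r(𝔸_f)`. -/
def KQrSet (d r : ℕ) (n : ℕ+) : Set (GL (Fin (2 * d)) AQf) :=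
  {g | g ∈ KdA d n ∧ g ∈ QrSet d r AQf}

/-- `K_{N,r} = K ∩ N_r(𝔸_f)`. -/
def KNrSet (d r : ℕ) (n : ℕ+) : Set (GL (Fin (2 * d)) AQf) :=
  {g | g ∈ KdA d n ∧ g ∈ NrSet d r AQf}

/-- `Γ_{ℓ,r} = Ker(GL_{d-r}(ℤ) → GL_{d-r}(ℤ/nℤ))`. -/
def GammaLr (m n : ℕ) : Subgroup (GL (Fin m) ℤ) := (glMap (Int.castRingHom (ZMod n))).ker

/-- `K_r = Ker(GSp_{2r}(Ẑ) → GSp_{2r}(ℤ/nℤ))` (with the similitude recorded, so that for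
`r = 0` this is the group of units of `Ẑ` congruent to `1` mod `n`). -/
def KrP (r : ℕ) (n : ℕ+) : Subgroup ↥(GSpP r ↥ZHat) :=
  (((glMap (projZHat n)).prodMap (Units.map (projZHat n).toMonoidHom)).comp
    (GSpP r ↥ZHat).subtype).ker

/-! Over any ring `R`, the last and the middle diagonal block of an element of `P_r(R)` determine
the first one, so they define the Levi quotient `P_r(R) → GL_{d-r}(R) × GSp_{2r}(R)`. It has a block
diagonal section, its kernel is `N_r(R)`, and `Q_r(R)` is the kernel of its `GL_{d-r}`-component.
On an element of `H_r` this component is integral at all finite places and rational, so it lies in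
`GL_{d-r}(Ẑ) ∩ GL_{d-r}(ℚ) = GL_{d-r}(ℤ)`. Hence `H_r` consists of the elements of `P_r(Ẑ)`
congruent to `1` modulo `n` whose last block comes from `GL_{d-r}(ℤ)`. The section splits off that
block, which gives (a), and shows that the image of `H_r` in the Levi quotient is all of
`Γ_{ℓ,r} × K_r`, which gives (b). -/

section GroupTheory

variable {G L M T : Type*} [Group G] [Group L] [Group M] [Group T]

lemma exists_surjective_of_map_eq_range {e : G →* M} (he : Function.Injective e) (f : G →* L)
    {φ : T →* L} (hφ : Function.Injective φ) {D : Subgroup G} (hD : D.map f = φ.range) :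
    ∃ ψ : ↥(D.map e) →* T, Function.Surjective ψ ∧
      ∀ h : ↥(D.map e), ψ h = 1 ↔ (h : M) ∈ (D ⊓ f.ker).map e := by
  let E : D ≃* D.map e := D.equivMapOfInjective e he
  let Φ : ↥(D.map f) ≃* T := (MulEquiv.subgroupCongr hD).trans (MonoidHom.ofInjective hφ).symm
  refine ⟨Φ.toMonoidHom.comp ((f.subgroupMap D).comp E.symm.toMonoidHom),
    Φ.surjective.comp ((f.subgroupMap_surjective D).comp E.symm.surjective), fun h => ?_⟩
  obtain ⟨x, rfl⟩ := E.surjective h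
  have hker : f x = 1 ↔ e x ∈ (D ⊓ f.ker).map e := by
    rw [Subgroup.mem_map_iff_mem he, Subgroup.mem_inf, MonoidHom.mem_ker, and_iff_right x.2]
  have hE : ((E x : ↥(D.map e)) : M) = e x := rfl
  simpa [hE, Subtype.ext_iff] using hker

end GroupTheory

section BlockTriangular

variable {l m n n' p R : Type*}

lemma submatrix_mul_of_forall_notMem_range [Fintype m] [Fintype n] [NonUnitalNonAssocSemiring R]
    {k q : Type*} {M : Matrix l m R} {N : Matrix m p R} {f : n → m} (hf : Function.Injective f)
    {u : k → l} {v : q → p} (h : ∀ x y, ∀ i ∉ Set.range f, M (u x) i * N i (v y) = 0) :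
    (M * N).submatrix u v = M.submatrix u f * N.submatrix f v := by
  ext x y
  simp only [submatrix_apply, Matrix.mul_apply]
  exact (Fintype.sum_of_injective f hf _ _ (h x y) fun _ => rfl).symm

lemma submatrix_eq_smul_one_iff [DecidableEq m] [DecidableEq n] [NonAssocSemiring R]
    {M : Matrix m m R} {f : n → m} (hf : Function.Injective f) {c : R} :
    M.submatrix f f = c • 1 ↔
      ∀ i ∈ Set.range f, ∀ j ∈ Set.range f, M i j = if i = j then c else 0 := by
  simp [← Matrix.ext_iff, Matrix.one_apply, hf.eq_iff]

/-- `f` enumerates, without repetition, the indices that the labelling `b` puts in block `k`. -/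
structure EnumeratesBlock {α : Type*} (b : m → α) (k : α) (f : n → m) : Prop where
  injective : Function.Injective f
  mem_range_iff : ∀ i, i ∈ Set.range f ↔ b i = k

/-- The group of invertible matrices that are block upper triangular for the labelling `b`. -/
def blockTriangularGL {α : Type*} [LinearOrder α] (b : m → α) (R : Type*) [CommRing R] [Fintype m]
    [DecidableEq m] : Subgroup (GL m R) where
  carrier := {g | BlockTriangular (g : Matrix m m R) b}
  one_mem' := blockTriangular_one
  mul_mem' := BlockTriangular.mul
  inv_mem' {g} hg := by
    have := g.invertible
    rw [Set.mem_ofPred_eq, coe_units_inv]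
    exact blockTriangular_inv_of_blockTriangular hg

namespace EnumeratesBlock

lemma apply_eq {α : Type*} {b : m → α} {k : α} {f : n → m} (hf : EnumeratesBlock b k f) (x : n) :
    b (f x) = k :=
  (hf.mem_range_iff _).1 ⟨x, rfl⟩

lemma submatrix_eq_smul_one_iff [DecidableEq m] [DecidableEq n] [NonAssocSemiring R]
    {M : Matrix m m R} {α : Type*} {b : m → α} {k : α} {f : n → m} (hf : EnumeratesBlock b k f)
    {c : R} :
    M.submatrix f f = c • 1 ↔ ∀ i j, b i = k → b j = k → M i j = if i = j then c else 0 := by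
  simp only [_root_.submatrix_eq_smul_one_iff hf.injective, hf.mem_range_iff]
  exact ⟨fun h i j hi hj => h i hi j hj, fun h i hi j hj => h i j hi hj⟩

variable [Fintype m] [Fintype n]

lemma submatrix_mul {α : Type*} [LinearOrder α] [NonUnitalNonAssocSemiring R] {b : m → α} {k : α}
    {f : n → m} (hf : EnumeratesBlock b k f) {M N : Matrix m m R} (hM : BlockTriangular M b)
    (hN : BlockTriangular N b) :
    (M * N).submatrix f f = M.submatrix f f * N.submatrix f f := by
  refine submatrix_mul_of_forall_notMem_range hf.injective fun x y i hi => ?_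
  rw [hf.mem_range_iff] at hi
  rcases lt_or_gt_of_ne hi with h | h
  · rw [hM (by rwa [hf.apply_eq]), zero_mul]
  · rw [hN (by rwa [hf.apply_eq]), mul_zero]

/-- The diagonal block of a block triangular matrix that is enumerated by `f`, as a
homomorphism. -/
def diagBlock [DecidableEq m] [DecidableEq n] {α : Type*} [LinearOrder α] [CommRing R] {b : m → α}
    {k : α} {f : n → m} (hf : EnumeratesBlock b k f) : blockTriangularGL b R →* GL n R :=
  MonoidHom.toHomUnits
    { toFun := fun g => (g.1 : Matrix m m R).submatrix f f
      map_one' := submatrix_one f hf.injective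
      map_mul' := fun g g' => hf.submatrix_mul g.2 g'.2 }

/- In `ᵗM J N` the triangular shape only lets blocks `≤ k` of `ᵗM` and `≤ l` of `N` contribute,
while `J` only pairs blocks whose labels add up to `k + l`. -/
lemma submatrix_transpose_mul_mul [Fintype n'] [CommRing R] {b : m → ℕ} {k l : ℕ} {f : n → m}
    {f' : n' → m} (hf : EnumeratesBlock b k f) (hf' : EnumeratesBlock b l f') {M J N : Matrix m m R}
    (hM : BlockTriangular M b) (hN : BlockTriangular N b)
    (hJ : ∀ i j, J i j ≠ 0 → b i + b j = k + l) :
    (Mᵀ * J * N).submatrix f f' = (M.submatrix f f)ᵀ * J.submatrix f f' * N.submatrix f' f' := by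
  have hJN : (J * N).submatrix f f' = J.submatrix f f' * N.submatrix f' f' := by
    refine submatrix_mul_of_forall_notMem_range hf'.injective fun x y j hj => ?_
    by_contra h
    have := hJ _ _ (left_ne_zero_of_mul h)
    rw [hf.apply_eq] at this
    exact hj ((hf'.mem_range_iff j).2 (by omega))
  rw [Matrix.mul_assoc, Matrix.mul_assoc, ← hJN]
  refine submatrix_mul_of_forall_notMem_range hf.injective fun x y i hi => ?_
  rw [hf.mem_range_iff] at hi
  rcases lt_or_gt_of_ne hi with h | h
  · rw [Matrix.mul_apply, Finset.sum_eq_zero, mul_zero]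
    intro j _
    by_contra hne
    have := hJ _ _ (left_ne_zero_of_mul hne)
    exact right_ne_zero_of_mul hne (hN (by rw [hf'.apply_eq]; omega))
  · rw [transpose_apply, hM (by rwa [hf.apply_eq]), zero_mul]

end EnumeratesBlock

end BlockTriangular

section StandardForms

variable {R S : Type*} [CommRing R] [CommRing S]

lemma Jmat_transpose (m : ℕ) : (Jmat m R)ᵀ = Jmat m R := by
  ext i j
  simp only [Jmat, transpose_apply, of_apply, add_comm (j : ℕ)]

lemma Jmat_mul_self (m : ℕ) : Jmat m R * Jmat m R = 1 := by
  ext i j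
  have hi (k : Fin m) : (i : ℕ) + k + 1 = m ↔ i.rev = k := by
    rw [Fin.ext_iff, Fin.val_rev]
    omega
  have hj : (i.rev : ℕ) + j + 1 = m ↔ i = j := by
    rw [Fin.ext_iff, Fin.val_rev]
    omega
  simp only [Matrix.mul_apply, Jmat, of_apply, hi, ite_mul, one_mul, zero_mul,
    Finset.sum_ite_eq, Finset.mem_univ, if_true, hj, Matrix.one_apply]

lemma Jmat_mul_Jmat_mul {m : ℕ} (M : Matrix (Fin m) (Fin m) R) :
    Jmat m R * (Jmat m R * M) = M := by
  rw [← Matrix.mul_assoc, Jmat_mul_self, Matrix.one_mul]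

lemma Jmat_map (f : R →+* S) (m : ℕ) : (Jmat m R).map f = Jmat m S := by
  ext i j
  simp [Jmat, apply_ite f]

lemma Jsymp_map (f : R →+* S) (d : ℕ) : (Jsymp d R).map f = Jsymp d S := by
  ext i j
  simp [Jsymp, apply_ite f]

lemma smul_Jsymp_injective {d : ℕ} (hd : 0 < d) :
    Function.Injective fun c : R => c • Jsymp d R := by
  intro a b hab
  have hlast : 2 * d - 1 + 1 = 2 * d := by omega
  simpa [Jsymp, hlast, hd] using congrFun₂ hab ⟨0, by omega⟩ ⟨2 * d - 1, by omega⟩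

/-- The matrix `J · ᵗC⁻¹ · J`, which is the only matrix `A` with `ᵗA · J · C = J`. -/
def contragredient (m : ℕ) (R : Type*) [CommRing R] :
    GL (Fin m) R →* Matrix (Fin m) (Fin m) R where
  toFun C := Jmat m R * (C⁻¹ : GL (Fin m) R).1ᵀ * Jmat m R
  map_one' := by simp [Jmat_mul_self]
  map_mul' C C' := by
    rw [_root_.mul_inv_rev, Units.val_mul, transpose_mul]
    simp only [Matrix.mul_assoc, Jmat_mul_Jmat_mul]

lemma contragredient_map {m : ℕ} (f : R →+* S) (C : GL (Fin m) R) :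
    (contragredient m R C).map f = contragredient m S (glMap f C) := by
  have hC : (C⁻¹ : GL (Fin m) R).1.map f = ((glMap f C)⁻¹ : GL (Fin m) S).1 := by
    rw [← _root_.map_inv]
    rfl
  simp only [contragredient, MonoidHom.coe_mk, OneHom.coe_mk, Matrix.map_mul, Jmat_map,
    transpose_map, hC]

lemma transpose_mul_Jmat_mul_eq_smul_iff {m : ℕ} {A : Matrix (Fin m) (Fin m) R}
    {C : GL (Fin m) R} {c : R} :
    Aᵀ * Jmat m R * C.1 = c • Jmat m R ↔ A = c • contragredient m R C := by
  constructor
  · intro h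
    have hA : Aᵀ * Jmat m R = c • (Jmat m R * (C⁻¹).1) := by
      rw [← Matrix.smul_mul, ← h, Matrix.mul_assoc, Units.mul_inv, Matrix.mul_one]
    have hA' := congrArg (fun X => Jmat m R * Xᵀ) hA
    simpa [-coe_units_inv, transpose_mul, Jmat_transpose, Jmat_mul_Jmat_mul, contragredient,
      Matrix.mul_assoc] using hA'
  · rintro rfl
    simp [-coe_units_inv, contragredient, transpose_mul, Jmat_transpose, Jmat_mul_Jmat_mul,
      Matrix.mul_assoc]

end StandardForms

section Levi

/-- The labelling of the coordinates by the blocks `0`, `1`, `2`, of sizes `d - r`, `2r`,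
`d - r`. -/
def blockIndex (d r : ℕ) (i : Fin (2 * d)) : ℕ := blk d r i

/-- The embedding of the first block of coordinates. -/
def topIndex (d r : ℕ) (i : Fin (d - r)) : Fin (2 * d) := ⟨i, by omega⟩

/-- The embedding of the middle block of coordinates. -/
def midIndex {d r : ℕ} (hrd : r ≤ d) (i : Fin (2 * r)) : Fin (2 * d) := ⟨d - r + i, by omega⟩

/-- The embedding of the last block of coordinates. -/
def botIndex (d r : ℕ) (i : Fin (d - r)) : Fin (2 * d) := ⟨d + r + i, by omega⟩

lemma enumeratesBlock_topIndex (d r : ℕ) : EnumeratesBlock (blockIndex d r) 0 (topIndex d r) where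
  injective i j h := by simpa [topIndex, Fin.ext_iff] using h
  mem_range_iff i := by
    have hi : blockIndex d r i = 0 ↔ (i : ℕ) < d - r := by grind [blockIndex, blk]
    rw [hi]
    exact ⟨by rintro ⟨j, rfl⟩; exact j.2, fun h => ⟨⟨i, h⟩, rfl⟩⟩

lemma enumeratesBlock_midIndex {d r : ℕ} (hrd : r ≤ d) :
    EnumeratesBlock (blockIndex d r) 1 (midIndex hrd) where
  injective i j h := by simpa [midIndex, Fin.ext_iff] using h
  mem_range_iff i := by
    have hi : blockIndex d r i = 1 ↔ d - r ≤ (i : ℕ) ∧ (i : ℕ) < d + r := by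
      grind [blockIndex, blk]
    rw [hi]
    exact ⟨by rintro ⟨j, rfl⟩; simp only [midIndex]; omega, fun h =>
      ⟨⟨i - (d - r), by omega⟩, Fin.ext (by simp only [midIndex]; omega)⟩⟩

lemma enumeratesBlock_botIndex (d r : ℕ) : EnumeratesBlock (blockIndex d r) 2 (botIndex d r) where
  injective i j h := by simpa [botIndex, Fin.ext_iff] using h
  mem_range_iff i := by
    have hi : blockIndex d r i = 2 ↔ d - r ≤ (i : ℕ) ∧ d + r ≤ (i : ℕ) := by
      grind [blockIndex, blk]
    rw [hi]
    exact ⟨by rintro ⟨j, rfl⟩; simp only [botIndex]; omega, fun h =>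
      ⟨⟨i - (d + r), by omega⟩, Fin.ext (by simp only [botIndex]; omega)⟩⟩

/-- The partition of the coordinates into the first, the last and the middle block, in this order:
the first two are paired with one another by `J_{d,d}`, and the third one with itself. -/
def blockEquiv {d r : ℕ} (hrd : r ≤ d) :
    (Fin (d - r) ⊕ Fin (d - r)) ⊕ Fin (2 * r) ≃ Fin (2 * d) :=
  Equiv.ofBijective (Sum.elim (Sum.elim (topIndex d r) (botIndex d r)) (midIndex hrd)) <| by
    rw [Fintype.bijective_iff_injective_and_card]
    refine ⟨?_, by simp only [Fintype.card_sum, Fintype.card_fin]; omega⟩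
    rintro ((i | i) | i) ((j | j) | j) h <;>
      simp only [Sum.elim_inl, Sum.elim_inr, topIndex, midIndex, botIndex, Fin.mk.injEq] at h <;>
      simp only [Sum.inl.injEq, Sum.inr.injEq, reduceCtorEq, Fin.ext_iff] <;> omega

variable {d r : ℕ} {R S : Type*} [CommRing R] [CommRing S]

lemma blockIndex_add_blockIndex {i j : Fin (2 * d)} (h : Jsymp d R i j ≠ 0) :
    blockIndex d r i + blockIndex d r j = 2 := by
  have hij : (i : ℕ) + j + 1 = 2 * d := by
    by_contra hij
    simp [Jsymp, hij] at h
  grind [blockIndex, blk]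

lemma Jsymp_submatrix_blockEquiv (hrd : r ≤ d) :
    (Jsymp d R).submatrix (blockEquiv hrd) (blockEquiv hrd) =
      fromBlocks (fromBlocks 0 (Jmat (d - r) R) (-Jmat (d - r) R) 0) 0 0 (Jsymp r R) := by
  ext ((i | i) | i) ((j | j) | j) <;>
    simp only [submatrix_apply, blockEquiv, Equiv.ofBijective_apply, Sum.elim_inl, Sum.elim_inr,
      Jsymp, Jmat, topIndex, midIndex, botIndex, of_apply, fromBlocks_apply₁₁, fromBlocks_apply₁₂,
      fromBlocks_apply₂₁, fromBlocks_apply₂₂, Matrix.neg_apply, Matrix.zero_apply] <;>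
    grind

lemma Jsymp_submatrix_midIndex (hrd : r ≤ d) :
    (Jsymp d R).submatrix (midIndex hrd) (midIndex hrd) = Jsymp r R :=
  congrArg toBlocks₂₂ (Jsymp_submatrix_blockEquiv hrd)

lemma Jsymp_submatrix_topIndex_botIndex (hrd : r ≤ d) :
    (Jsymp d R).submatrix (topIndex d r) (botIndex d r) = Jmat (d - r) R :=
  congrArg toBlocks₁₂ (congrArg toBlocks₁₁ (Jsymp_submatrix_blockEquiv hrd))

/-- The block diagonal matrix with diagonal blocks `A`, `B`, `C`, from top to bottom. -/
def leviMatrix (hrd : r ≤ d) (A : Matrix (Fin (d - r)) (Fin (d - r)) R)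
    (B : Matrix (Fin (2 * r)) (Fin (2 * r)) R) (C : Matrix (Fin (d - r)) (Fin (d - r)) R) :
    Matrix (Fin (2 * d)) (Fin (2 * d)) R :=
  (fromBlocks (fromBlocks A 0 0 C) 0 0 B).submatrix (blockEquiv hrd).symm (blockEquiv hrd).symm

variable (hrd : r ≤ d) {A A' C C' : Matrix (Fin (d - r)) (Fin (d - r)) R}
  {B B' : Matrix (Fin (2 * r)) (Fin (2 * r)) R}

lemma leviMatrix_one : leviMatrix hrd (1 : Matrix _ _ R) 1 1 = 1 := by
  simp only [leviMatrix, fromBlocks_one, submatrix_one_equiv]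

lemma leviMatrix_mul :
    leviMatrix hrd A B C * leviMatrix hrd A' B' C' = leviMatrix hrd (A * A') (B * B') (C * C') := by
  simp [leviMatrix, submatrix_mul_equiv, fromBlocks_multiply]

lemma leviMatrix_map (f : R →+* S) :
    (leviMatrix hrd A B C).map f = leviMatrix hrd (A.map f) (B.map f) (C.map f) := by
  simp [leviMatrix, fromBlocks_map, ← submatrix_map, Matrix.map_zero]

lemma leviMatrix_submatrix_midIndex :
    (leviMatrix hrd A B C).submatrix (midIndex hrd) (midIndex hrd) = B := by
  have hmid (i) : (blockEquiv hrd).symm (midIndex hrd i) = Sum.inr i :=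
    (blockEquiv hrd).symm_apply_apply (Sum.inr i)
  ext i j
  simp [leviMatrix, hmid]

lemma leviMatrix_submatrix_botIndex :
    (leviMatrix hrd A B C).submatrix (botIndex d r) (botIndex d r) = C := by
  have hbot (i) : (blockEquiv hrd).symm (botIndex d r i) = Sum.inl (Sum.inr i) :=
    (blockEquiv hrd).symm_apply_apply (Sum.inl (Sum.inr i))
  ext i j
  simp [leviMatrix, hbot]

lemma leviMatrix_apply_of_blockIndex_ne {i j : Fin (2 * d)}
    (h : blockIndex d r i ≠ blockIndex d r j) : leviMatrix hrd A B C i j = 0 := by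
  obtain ⟨i, rfl⟩ := (blockEquiv hrd).surjective i
  obtain ⟨j, rfl⟩ := (blockEquiv hrd).surjective j
  rw [leviMatrix, submatrix_apply, Equiv.symm_apply_apply, Equiv.symm_apply_apply]
  obtain (i | i) | i := i <;> obtain (j | j) | j := j <;> try rfl
  all_goals exact absurd (by simp [blockEquiv, (enumeratesBlock_topIndex d r).apply_eq,
    (enumeratesBlock_botIndex d r).apply_eq, (enumeratesBlock_midIndex hrd).apply_eq]) h

lemma leviMatrix_transpose_mul_Jsymp_mul {c : R}
    (hAC : Aᵀ * Jmat (d - r) R * C = c • Jmat (d - r) R)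
    (hB : Bᵀ * Jsymp r R * B = c • Jsymp r R) :
    (leviMatrix hrd A B C)ᵀ * Jsymp d R * leviMatrix hrd A B C = c • Jsymp d R := by
  have hCA : Cᵀ * Jmat (d - r) R * A = c • Jmat (d - r) R := by
    simpa [transpose_mul, Jmat_transpose, Matrix.mul_assoc] using congrArg transpose hAC
  have hJ : Jsymp d R = (fromBlocks (fromBlocks 0 (Jmat (d - r) R) (-Jmat (d - r) R) 0) 0 0
      (Jsymp r R)).submatrix (blockEquiv hrd).symm (blockEquiv hrd).symm := by
    rw [← Jsymp_submatrix_blockEquiv hrd, submatrix_submatrix, Equiv.self_comp_symm,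
      submatrix_id_id]
  rw [hJ]
  change _ = (c • fromBlocks _ _ _ _).submatrix _ _
  simp [leviMatrix, transpose_submatrix, fromBlocks_transpose, submatrix_mul_equiv,
    fromBlocks_multiply, fromBlocks_smul, hAC, hCA, hB]

end Levi

section Parabolic

/-- The parabolic subgroup `P_r(R)`, with the similitude factor recorded as in `GSpP`. -/
def parabolic (d r : ℕ) (R : Type*) [CommRing R] : Subgroup (GL (Fin (2 * d)) R × Rˣ) :=
  GSpP d R ⊓ (blockTriangularGL (blockIndex d r) R).comap (MonoidHom.fst _ _)

/-- The inclusion of `P_r(R)` in `GL_{2d}(R)`, which forgets the recorded similitude factor. -/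
def parabolicToGL (d r : ℕ) (R : Type*) [CommRing R] : parabolic d r R →* GL (Fin (2 * d)) R :=
  (MonoidHom.fst _ _).comp (parabolic d r R).subtype

/-- The inclusion of `P_r(R)` in the group of block triangular matrices. -/
def parabolicToBlockTriangularGL (d r : ℕ) (R : Type*) [CommRing R] :
    parabolic d r R →* blockTriangularGL (blockIndex d r) R :=
  (parabolicToGL d r R).codRestrict _ fun g => g.2.2

/-- The projection `P_r(R) → GL_{d-r}(R)` to the last diagonal block. -/
def leviGL (d r : ℕ) (R : Type*) [CommRing R] : parabolic d r R →* GL (Fin (d - r)) R :=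
  (enumeratesBlock_botIndex d r).diagBlock.comp (parabolicToBlockTriangularGL d r R)

variable {d r : ℕ} {R : Type*} [CommRing R]

lemma blocks_transpose_mul_Jsymp_mul {m n : Type*} [Fintype m] [Fintype n] {k l : ℕ}
    (hkl : k + l = 2) {u : m → Fin (2 * d)} {v : n → Fin (2 * d)}
    (hu : EnumeratesBlock (blockIndex d r) k u) (hv : EnumeratesBlock (blockIndex d r) l v)
    (g : parabolic d r R) :
    (g.1.1.1.submatrix u u)ᵀ * (Jsymp d R).submatrix u v * g.1.1.1.submatrix v v =
      g.1.2.1 • (Jsymp d R).submatrix u v := by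
  have hg : (g.1.1.1)ᵀ * Jsymp d R * g.1.1.1 = g.1.2.1 • Jsymp d R := g.2.1
  have hJ (i j) (hij : Jsymp d R i j ≠ 0) : blockIndex d r i + blockIndex d r j = k + l :=
    (blockIndex_add_blockIndex hij).trans hkl.symm
  exact (hu.submatrix_transpose_mul_mul hv g.2.2 g.2.2 hJ).symm.trans
    (congrArg (·.submatrix u v) hg)

lemma midBlock_mem_GSpP (hrd : r ≤ d) (g : parabolic d r R) :
    ((enumeratesBlock_midIndex hrd).diagBlock (parabolicToBlockTriangularGL d r R g), g.1.2) ∈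
      GSpP r R := by
  have h := blocks_transpose_mul_Jsymp_mul rfl (enumeratesBlock_midIndex hrd)
    (enumeratesBlock_midIndex hrd) g
  rwa [Jsymp_submatrix_midIndex hrd] at h

lemma topBlock_eq_smul_contragredient (hrd : r ≤ d) (g : parabolic d r R) :
    g.1.1.1.submatrix (topIndex d r) (topIndex d r) =
      g.1.2.1 • contragredient (d - r) R (leviGL d r R g) := by
  have h := blocks_transpose_mul_Jsymp_mul rfl (enumeratesBlock_topIndex d r)
    (enumeratesBlock_botIndex d r) g
  rw [Jsymp_submatrix_topIndex_botIndex hrd] at h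
  exact transpose_mul_Jmat_mul_eq_smul_iff.1 h

/-- The projection `P_r(R) → GSp_{2r}(R)` to the middle diagonal block. -/
def leviGSp (hrd : r ≤ d) (R : Type*) [CommRing R] : parabolic d r R →* GSpP r R :=
  (((enumeratesBlock_midIndex hrd).diagBlock.comp (parabolicToBlockTriangularGL d r R)).prod
    ((MonoidHom.snd _ _).comp (parabolic d r R).subtype)).codRestrict _ (midBlock_mem_GSpP hrd)

/-- The projection of `P_r(R)` to its Levi quotient `GL_{d-r}(R) × GSp_{2r}(R)`. -/
def levi (hrd : r ≤ d) (R : Type*) [CommRing R] :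
    parabolic d r R →* GL (Fin (d - r)) R × GSpP r R :=
  (leviGL d r R).prod (leviGSp hrd R)

/-- The homomorphism `(C, B) ↦ blockdiag(c(B) · J · ᵗC⁻¹ · J, B, C)`. -/
def leviMatrixHom (hrd : r ≤ d) (R : Type*) [CommRing R] :
    GL (Fin (d - r)) R × GSpP r R →* Matrix (Fin (2 * d)) (Fin (2 * d)) R where
  toFun y := leviMatrix hrd (y.2.1.2.1 • contragredient (d - r) R y.1) y.2.1.1.1 y.1.1
  map_one' := by simp [leviMatrix_one]
  map_mul' y z := by simp [leviMatrix_mul, smul_smul, mul_comm]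

lemma leviMatrixHom_mem_parabolic (hrd : r ≤ d) (y : GL (Fin (d - r)) R × GSpP r R) :
    ((leviMatrixHom hrd R).toHomUnits y, y.2.1.2) ∈ parabolic d r R :=
  ⟨leviMatrix_transpose_mul_Jsymp_mul hrd (transpose_mul_Jmat_mul_eq_smul_iff.2 rfl) y.2.2,
    fun _ _ h => leviMatrix_apply_of_blockIndex_ne hrd h.ne'⟩

/-- The block diagonal section of the projection of `P_r(R)` to its Levi quotient. -/
def leviSection (hrd : r ≤ d) (R : Type*) [CommRing R] :
    GL (Fin (d - r)) R × GSpP r R →* parabolic d r R :=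
  ((leviMatrixHom hrd R).toHomUnits.prod
    ((MonoidHom.snd _ _).comp ((GSpP r R).subtype.comp (MonoidHom.snd _ _)))).codRestrict _
      (leviMatrixHom_mem_parabolic hrd)

lemma levi_leviSection (hrd : r ≤ d) (y : GL (Fin (d - r)) R × GSpP r R) :
    levi hrd R (leviSection hrd R y) = y := by
  refine Prod.ext (Units.ext ?_) (Subtype.ext (Prod.ext (Units.ext ?_) rfl))
  · exact leviMatrix_submatrix_botIndex hrd
  · exact leviMatrix_submatrix_midIndex hrd

lemma GSpP_ext_of_fst_eq (hd : 0 < d) {x y : GL (Fin (2 * d)) R × Rˣ} (hx : x ∈ GSpP d R)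
    (hy : y ∈ GSpP d R) (h : x.1 = y.1) : x = y := by
  refine Prod.ext h (Units.ext (smul_Jsymp_injective hd ?_))
  change x.2.1 • Jsymp d R = y.2.1 • Jsymp d R
  rw [← show _ = x.2.1 • _ from hx, ← show _ = y.2.1 • _ from hy, h]

lemma parabolicToGL_injective (hd : 0 < d) : Function.Injective (parabolicToGL d r R) :=
  fun x y h => Subtype.ext (GSpP_ext_of_fst_eq hd x.2.1 y.2.1 h)

lemma PrSet_eq_range : PrSet d r R = Set.range (parabolicToGL d r R) := by
  ext g
  constructor
  · rintro ⟨⟨x, hx, rfl⟩, hg⟩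
    exact ⟨⟨x, hx, fun _ _ h => hg _ _ h⟩, rfl⟩
  · rintro ⟨x, rfl⟩
    exact ⟨⟨x, x.2.1, rfl⟩, fun _ _ h => x.2.2 h⟩

lemma leviGL_eq_one_iff {x : parabolic d r R} :
    leviGL d r R x = 1 ↔ ∀ i j, blockIndex d r i = 2 → blockIndex d r j = 2 →
      x.1.1.1 i j = if i = j then 1 else 0 := by
  rw [← (enumeratesBlock_botIndex d r).submatrix_eq_smul_one_iff, one_smul, Units.ext_iff]
  rfl

lemma leviGSp_eq_one_iff (hrd : r ≤ d) {x : parabolic d r R} :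
    leviGSp hrd R x = 1 ↔ (∀ i j, blockIndex d r i = 1 → blockIndex d r j = 1 →
      x.1.1.1 i j = if i = j then 1 else 0) ∧ x.1.2 = 1 := by
  rw [← (enumeratesBlock_midIndex hrd).submatrix_eq_smul_one_iff, one_smul, Subtype.ext_iff,
    Prod.ext_iff, Units.ext_iff]
  rfl

lemma topBlock_apply_of_eq_one (hrd : r ≤ d) {x : parabolic d r R} (hx : leviGL d r R x = 1) :
    ∀ i j, blockIndex d r i = 0 → blockIndex d r j = 0 →
      x.1.1.1 i j = if i = j then x.1.2.1 else 0 := by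
  rw [← (enumeratesBlock_topIndex d r).submatrix_eq_smul_one_iff,
    topBlock_eq_smul_contragredient hrd, hx, map_one]

lemma QrSet_eq_image_ker_leviGL (hrd : r ≤ d) :
    QrSet d r R = parabolicToGL d r R '' (leviGL d r R).ker := by
  ext g
  constructor
  · rintro ⟨c, hc, htri, -, hbot⟩
    exact ⟨⟨(g, c), hc, fun _ _ h => htri _ _ h⟩, leviGL_eq_one_iff.2 hbot, rfl⟩
  · rintro ⟨x, hx, rfl⟩
    exact ⟨x.1.2, x.2.1, fun _ _ h => x.2.2 h, topBlock_apply_of_eq_one hrd hx,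
      leviGL_eq_one_iff.1 hx⟩

lemma NrSet_eq_image_ker_levi (hrd : r < d) :
    NrSet d r R = parabolicToGL d r R '' (levi hrd.le R).ker := by
  ext g
  constructor
  · rintro ⟨⟨⟨g, c⟩, hc, rfl⟩, htri, hdiag⟩
    have hblock (k : ℕ) (i j : Fin (2 * d)) (hi : blockIndex d r i = k)
      (hj : blockIndex d r j = k) : g.1 i j = if i = j then 1 else 0 := hdiag i j (hi.trans hj.symm)
    let x : parabolic d r R := ⟨(g, c), hc, fun _ _ h => htri _ _ h⟩
    have hGL : leviGL d r R x = 1 := leviGL_eq_one_iff.2 (hblock 2)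
    have hc : c = 1 := by
      let i : Fin (2 * d) := topIndex d r ⟨0, Nat.sub_pos_of_lt hrd⟩
      have hi : blockIndex d r i = 0 := (enumeratesBlock_topIndex d r).apply_eq _
      have h := (topBlock_apply_of_eq_one hrd.le hGL i i hi hi).symm.trans (hblock 0 i i hi hi)
      simpa [x] using h
    exact ⟨x, Prod.ext hGL ((leviGSp_eq_one_iff hrd.le).2 ⟨hblock 1, hc⟩), rfl⟩
  · rintro ⟨x, hx, rfl⟩
    obtain ⟨hGL, hGSp⟩ := Prod.ext_iff.1 hx
    obtain ⟨hmid, hc⟩ := (leviGSp_eq_one_iff hrd.le).1 hGSp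
    have htop := topBlock_apply_of_eq_one hrd.le hGL
    rw [hc, Units.val_one] at htop
    refine ⟨⟨x, x.2.1, rfl⟩, fun _ _ h => x.2.2 h, fun i j hij => ?_⟩
    have hi : blockIndex d r i = 0 ∨ blockIndex d r i = 1 ∨ blockIndex d r i = 2 := by
      grind [blockIndex, blk]
    rcases hi with hi | hi | hi
    · exact htop i j hi (hij.symm.trans hi)
    · exact hmid i j hi (hij.symm.trans hi)
    · exact leviGL_eq_one_iff.1 hGL i j hi (hij.symm.trans hi)

lemma LlrSet_subset_PrSet : LlrSet d r R ⊆ PrSet d r R := fun g hg =>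
  ⟨⟨(g, 1), hg.1.trans (one_smul _ _).symm, rfl⟩, fun i j hij => hg.2.1 i j hij.ne'⟩

lemma leviSection_mem_LlrSet (hrd : r ≤ d) (C : GL (Fin (d - r)) R) :
    parabolicToGL d r R (leviSection hrd R (C, 1)) ∈ LlrSet d r R := by
  have hmid : leviGSp hrd R (leviSection hrd R (C, 1)) = 1 :=
    congrArg Prod.snd (levi_leviSection hrd (C, 1))
  exact ⟨(leviSection hrd R (C, 1)).2.1.trans (one_smul _ _),
    fun i j hij => leviMatrix_apply_of_blockIndex_ne hrd hij, ((leviGSp_eq_one_iff hrd).1 hmid).1⟩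

end Parabolic

section BaseChange

variable {d r : ℕ} {R S : Type*} [CommRing R] [CommRing S]

lemma map_mem_GSpP (f : R →+* S) {x : GL (Fin (2 * d)) R × Rˣ} (hx : x ∈ GSpP d R) :
    (glMap f).prodMap (Units.map f.toMonoidHom) x ∈ GSpP d S := by
  have h := congrArg (·.map f) (show _ = x.2.1 • _ from hx)
  simp only [Matrix.map_mul, transpose_map, Jsymp_map,
    Matrix.map_smul' f _ _ (map_mul f)] at h
  exact h

/-- Functoriality of `GSp_{2d}` in the ring. -/
def mapGSpP (d : ℕ) (f : R →+* S) : GSpP d R →* GSpP d S :=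
  (((glMap f).prodMap (Units.map f.toMonoidHom)).comp (GSpP d R).subtype).codRestrict _
    fun x => map_mem_GSpP f x.2

/-- Functoriality of `P_r` in the ring. -/
def mapParabolic (d r : ℕ) (f : R →+* S) : parabolic d r R →* parabolic d r S :=
  (((glMap f).prodMap (Units.map f.toMonoidHom)).comp (parabolic d r R).subtype).codRestrict _
    fun x => ⟨map_mem_GSpP f x.2.1, fun _ _ h => (congrArg f (x.2.2 h)).trans (map_zero f)⟩

lemma parabolicToGL_mapParabolic (f : R →+* S) (x : parabolic d r R) :
    parabolicToGL d r S (mapParabolic d r f x) = glMap f (parabolicToGL d r R x) :=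
  rfl

lemma leviGL_mapParabolic (f : R →+* S) (x : parabolic d r R) :
    leviGL d r S (mapParabolic d r f x) = glMap f (leviGL d r R x) :=
  Units.ext rfl

lemma leviGSp_mapParabolic (hrd : r ≤ d) (f : R →+* S) (x : parabolic d r R) :
    leviGSp hrd S (mapParabolic d r f x) = mapGSpP r f (leviGSp hrd R x) :=
  Subtype.ext (Prod.ext (Units.ext rfl) rfl)

lemma mapParabolic_leviSection (hrd : r ≤ d) (f : R →+* S) (y : GL (Fin (d - r)) R × GSpP r R) :
    mapParabolic d r f (leviSection hrd R y) =
      leviSection hrd S (glMap f y.1, mapGSpP r f y.2) := by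
  refine Subtype.ext (Prod.ext (Units.ext ((leviMatrix_map hrd f).trans ?_)) rfl)
  rw [Matrix.map_smul' f _ _ (map_mul f), contragredient_map]
  rfl

lemma glMap_injective {m : ℕ} {f : R →+* S} (hf : Function.Injective f) :
    Function.Injective (glMap (m := m) f) :=
  Units.map_injective (Matrix.map_injective hf)

lemma mapGSpP_injective {f : R →+* S} (hf : Function.Injective f) :
    Function.Injective (mapGSpP d f) := by
  intro x y h
  obtain ⟨h₁, h₂⟩ := Prod.ext_iff.1 (congrArg Subtype.val h)
  exact Subtype.ext (Prod.ext (glMap_injective hf h₁) (Units.map_injective hf h₂))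

lemma glMap_glMap {m : ℕ} {T : Type*} [CommRing T] (f : R →+* S) (g : S →+* T)
    (C : GL (Fin m) R) : glMap g (glMap f C) = glMap (g.comp f) C :=
  Units.ext rfl

end BaseChange

section ProfiniteIntegers

lemma projZHat_eq_castHom {m k : ℕ+} (h : (m : ℕ) ∣ k) (x : ZHat) :
    projZHat m x = ZMod.castHom h (ZMod m) (projZHat k x) :=
  (x.2 m k h).symm

instance : Module.IsTorsionFree ℤ ZHat := by
  rw [Module.isTorsionFree_iff_smul_eq_zero]
  refine fun a x hax => or_iff_not_imp_left.2 fun ha => Subtype.ext (funext fun k => ?_)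
  let b : ℕ+ := ⟨a.natAbs, Int.natAbs_pos.2 ha⟩
  obtain ⟨z, hz⟩ := ZMod.intCast_surjective (projZHat (b * k) x)
  have haz : (a.natAbs * k : ℤ) ∣ a * z := by
    have h := congrArg (projZHat (b * k)) hax
    rw [zsmul_eq_mul, map_mul, map_intCast, ← hz, map_zero, ← Int.cast_mul,
      ZMod.intCast_zmod_eq_zero_iff_dvd] at h
    exact_mod_cast h
  have hkz : (k : ℤ) ∣ z := by
    rw [← Int.natAbs_dvd_natAbs, Int.natAbs_mul, Int.natAbs_mul, Int.natAbs_natCast] at haz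
    exact Int.natCast_dvd.2 (Nat.dvd_of_mul_dvd_mul_left b.pos haz)
  change projZHat k x = 0
  rw [projZHat_eq_castHom (k := b * k) (Dvd.intro_left _ rfl), ← hz, map_intCast]
  exact (ZMod.intCast_zmod_eq_zero_iff_dvd z k).2 hkz

lemma intCast_ZHat_injective : Function.Injective (Int.castRingHom ZHat) := by
  have : Nontrivial ZHat := (projZHat 2).domain_nontrivial
  intro a b hab
  exact smul_left_injective ℤ (one_ne_zero (α := ZHat)) (by simpa using hab)

lemma zhatToA_injective : Function.Injective zhatToA :=
  Algebra.TensorProduct.includeLeft_injective (R := ℤ) (S := ℤ) (A := ZHat) (B := ℚ)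
    (RingHom.injective_int (algebraMap ℤ ℚ))

lemma zhatToA_comp_intCast :
    zhatToA.comp (Int.castRingHom ZHat) = ratToA.comp (Int.castRingHom ℚ) :=
  RingHom.ext_int _ _

lemma mem_range_intCast_of_zhatToA_eq_ratToA {x : ZHat} {q : ℚ} (h : zhatToA x = ratToA q) :
    x ∈ (Int.castRingHom ZHat).range := by
  have hmul : x * (q.den : ℤ) = (q.num : ZHat) := by
    apply zhatToA_injective
    rw [map_mul, h, map_intCast, map_intCast, ← map_intCast ratToA, ← map_intCast ratToA,
      ← map_mul]
    exact congrArg ratToA (mod_cast Rat.mul_den_eq_num q)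
  have hdvd : q.den ∣ q.num.natAbs := by
    let k : ℕ+ := ⟨q.den, q.den_pos⟩
    have hk : ((q.den : ℤ) : ZMod k) = 0 := (ZMod.intCast_zmod_eq_zero_iff_dvd _ k).2 dvd_rfl
    have hmod := congrArg (projZHat k) hmul
    rw [map_mul, map_intCast, map_intCast, hk, mul_zero, eq_comm,
      ZMod.intCast_zmod_eq_zero_iff_dvd] at hmod
    exact Int.natCast_dvd.1 hmod
  have hden : q.den = 1 := q.reduced.symm.eq_one_of_dvd hdvd
  exact ⟨q.num, by simpa [hden] using hmul.symm⟩

lemma mem_range_glMap {m : ℕ} {R S : Type*} [CommRing R] [CommRing S] {f : R →+* S}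
    (hf : Function.Injective f) {C : GL (Fin m) S} (hC : ∀ i j, C.1 i j ∈ f.range)
    (hC' : ∀ i j, (C⁻¹).1 i j ∈ f.range) : C ∈ (glMap f).range := by
  choose A hA using hC
  choose B hB using hC'
  have hA : f.mapMatrix (of A) = C.1 := Matrix.ext hA
  have hB : f.mapMatrix (of B) = (C⁻¹).1 := Matrix.ext hB
  have hf' : Function.Injective f.mapMatrix := Matrix.map_injective hf (m := Fin m) (n := Fin m)
  refine ⟨⟨of A, of B, hf' ?_, hf' ?_⟩, Units.ext hA⟩
  · rw [map_mul, hA, hB, Units.mul_inv, map_one]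
  · rw [map_mul, hA, hB, Units.inv_mul, map_one]

lemma mem_range_glMap_intCast {m : ℕ} {C : GL (Fin m) ZHat} {D : GL (Fin m) ℚ}
    (h : glMap zhatToA C = glMap ratToA D) : C ∈ (glMap (Int.castRingHom ZHat)).range := by
  have h' : glMap zhatToA C⁻¹ = glMap ratToA D⁻¹ := by rw [_root_.map_inv, h, _root_.map_inv]
  refine mem_range_glMap intCast_ZHat_injective (fun i j => ?_) (fun i j => ?_)
  · exact mem_range_intCast_of_zhatToA_eq_ratToA (congrArg (fun g : GL _ _ => g.1 i j) h)
  · exact mem_range_intCast_of_zhatToA_eq_ratToA (congrArg (fun g : GL _ _ => g.1 i j) h')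

end ProfiniteIntegers

section CongruenceSubgroup

/-- The embedding of `P_r(Ẑ)` in `GL_{2d}(𝔸_f)`. -/
def parabolicZHatToA (d r : ℕ) : parabolic d r ZHat →* GL (Fin (2 * d)) AQf :=
  (glMap zhatToA).comp (parabolicToGL d r ZHat)

/-- The preimage of `H_r` in `P_r(Ẑ)`: the elements congruent to `1` modulo `n` whose last diagonal
block is the image of an element of `GL_{d-r}(ℤ)`. -/
def integralHr (d r : ℕ) (n : ℕ+) : Subgroup (parabolic d r ZHat) :=
  (mapParabolic d r (projZHat n)).ker ⊓
    (glMap (Int.castRingHom ZHat)).range.comap (leviGL d r ZHat)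

variable {d r : ℕ} {n : ℕ+}

lemma parabolicZHatToA_injective (hd : 0 < d) : Function.Injective (parabolicZHatToA d r) :=
  (glMap_injective zhatToA_injective).comp (parabolicToGL_injective hd)

lemma parabolicZHatToA_mem_KdA {x : parabolic d r ZHat}
    (hx : mapParabolic d r (projZHat n) x = 1) : parabolicZHatToA d r x ∈ KdA d n :=
  ⟨_, ⟨⟨x, x.2.1, rfl⟩, congrArg (parabolicToGL d r _) hx⟩, rfl⟩

lemma exists_mapParabolic_eq (hd : 0 < d) {y : parabolic d r AQf}
    (hy : parabolicToGL d r AQf y ∈ KdA d n) :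
    ∃ x, mapParabolic d r (projZHat n) x = 1 ∧ mapParabolic d r zhatToA x = y := by
  obtain ⟨_, ⟨⟨x, hx, rfl⟩, hmod⟩, hxy⟩ := hy
  have htri : BlockTriangular x.1.1 (blockIndex d r) := fun i j hij => zhatToA_injective <|
    (congrArg (fun g : GL _ _ => g.1 i j) hxy).trans ((y.2.2 hij).trans (map_zero _).symm)
  exact ⟨⟨x, hx, htri⟩, parabolicToGL_injective hd hmod, parabolicToGL_injective hd hxy⟩

lemma HrSet_subset_map_integralHr (hrd : r < d) :
    HrSet d r n ⊆ (integralHr d r n).map (parabolicZHatToA d r) := by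
  rintro _ ⟨hK, _, ⟨p, hp, rfl⟩, q, hq, rfl⟩
  rw [PrSet_eq_range] at hp
  rw [QrSet_eq_image_ker_leviGL hrd.le] at hq
  obtain ⟨p, rfl⟩ := hp
  obtain ⟨q, hq, rfl⟩ := hq
  obtain ⟨x, hmod, hx⟩ := exists_mapParabolic_eq (y := mapParabolic d r ratToA p * q)
    (Nat.zero_lt_of_lt hrd) hK
  have hGL : glMap zhatToA (leviGL d r ZHat x) = glMap ratToA (leviGL d r ℚ p) := by
    rw [← leviGL_mapParabolic, hx, map_mul, leviGL_mapParabolic, MonoidHom.mem_ker.1 hq, mul_one]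
  exact ⟨x, ⟨hmod, mem_range_glMap_intCast hGL⟩, congrArg (parabolicToGL d r AQf) hx⟩

lemma exists_mul_eq_of_mem_integralHr (hrd : r < d) {x : parabolic d r ZHat}
    (hx : x ∈ integralHr d r n) :
    ∃ a ∈ HlrSet d r n, ∃ b ∈ KQrSet d r n, parabolicZHatToA d r x = a * b := by
  obtain ⟨hmod, C, hC⟩ := hx
  let p : parabolic d r ZHat := leviSection hrd.le ZHat (leviGL d r ZHat x, 1)
  have hp : mapParabolic d r (projZHat n) p = 1 := by
    rw [mapParabolic_leviSection, ← leviGL_mapParabolic, MonoidHom.mem_ker.1 hmod, map_one, map_one]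
    exact map_one _
  have hpx : mapParabolic d r (projZHat n) (p⁻¹ * x) = 1 := by
    rw [map_mul, _root_.map_inv, hp, MonoidHom.mem_ker.1 hmod, inv_one, mul_one]
  have hrat : glMap ratToA (parabolicToGL d r ℚ
      (leviSection hrd.le ℚ (glMap (Int.castRingHom ℚ) C, 1))) = parabolicZHatToA d r p := by
    rw [parabolicZHatToA, MonoidHom.comp_apply, ← parabolicToGL_mapParabolic,
      ← parabolicToGL_mapParabolic, mapParabolic_leviSection, mapParabolic_leviSection, ← hC,
      glMap_glMap, glMap_glMap, zhatToA_comp_intCast, map_one, map_one]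
  have hGL : leviGL d r ZHat (p⁻¹ * x) = 1 := by
    have hlevi : leviGL d r ZHat p = leviGL d r ZHat x :=
      congrArg Prod.fst (levi_leviSection hrd.le _)
    rw [map_mul, _root_.map_inv, hlevi, inv_mul_cancel]
  refine ⟨parabolicZHatToA d r p, ⟨parabolicZHatToA_mem_KdA hp, _,
    ⟨_, leviSection_mem_LlrSet hrd.le _, hrat⟩, 1, ?_, (mul_one _).symm⟩,
    parabolicZHatToA d r (p⁻¹ * x), ⟨parabolicZHatToA_mem_KdA hpx, ?_⟩, ?_⟩
  · rw [NrSet_eq_image_ker_levi hrd]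
    exact ⟨1, one_mem _, map_one _⟩
  · rw [QrSet_eq_image_ker_leviGL hrd.le]
    refine ⟨mapParabolic d r zhatToA (p⁻¹ * x), ?_, rfl⟩
    rw [SetLike.mem_coe, MonoidHom.mem_ker, leviGL_mapParabolic, hGL, map_one]
  · rw [← map_mul, mul_inv_cancel_left]

lemma mul_mem_HrSet (hrd : r < d) {a b : GL (Fin (2 * d)) AQf} (ha : a ∈ HlrSet d r n)
    (hb : b ∈ KQrSet d r n) : a * b ∈ HrSet d r n := by
  obtain ⟨haK, _, ⟨p, hp, rfl⟩, u, hu, rfl⟩ := ha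
  obtain ⟨hbK, hb⟩ := hb
  refine ⟨mul_mem haK hbK, _, ⟨p, LlrSet_subset_PrSet hp, rfl⟩, u * b, ?_, mul_assoc _ _ _⟩
  rw [NrSet_eq_image_ker_levi hrd] at hu
  rw [QrSet_eq_image_ker_leviGL hrd.le] at hb ⊢
  obtain ⟨u, hu, rfl⟩ := hu
  obtain ⟨b, hb, rfl⟩ := hb
  exact ⟨u * b, mul_mem (congrArg Prod.fst hu) hb, map_mul _ _ _⟩

lemma coe_map_integralHr (hrd : r < d) :
    ((integralHr d r n).map (parabolicZHatToA d r) : Set (GL (Fin (2 * d)) AQf)) =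
      HrSet d r n := by
  refine subset_antisymm ?_ (HrSet_subset_map_integralHr hrd)
  rintro _ ⟨x, hx, rfl⟩
  obtain ⟨a, ha, b, hb, hab⟩ := exists_mul_eq_of_mem_integralHr hrd hx
  exact hab ▸ mul_mem_HrSet hrd ha hb

lemma mem_HrSet_iff (hrd : r < d) {g : GL (Fin (2 * d)) AQf} :
    g ∈ HrSet d r n ↔ ∃ a ∈ HlrSet d r n, ∃ b ∈ KQrSet d r n, g = a * b := by
  constructor
  · rw [← coe_map_integralHr hrd]
    rintro ⟨x, hx, rfl⟩
    exact exists_mul_eq_of_mem_integralHr hrd hx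
  · rintro ⟨a, ha, b, hb, rfl⟩
    exact mul_mem_HrSet hrd ha hb

lemma levi_mapParabolic_eq_one_iff (hrd : r ≤ d) {R S : Type*} [CommRing R] [CommRing S]
    {f : R →+* S} (hf : Function.Injective f) {x : parabolic d r R} :
    levi hrd S (mapParabolic d r f x) = 1 ↔ levi hrd R x = 1 := by
  have hinj : Function.Injective ((glMap (m := d - r) f).prodMap (mapGSpP r f)) :=
    (glMap_injective hf).prodMap (mapGSpP_injective hf)
  rw [← map_eq_one_iff _ hinj, levi, levi, MonoidHom.prod_apply, leviGL_mapParabolic,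
    leviGSp_mapParabolic]
  rfl

lemma coe_map_integralHr_inf_ker_levi (hrd : r < d) :
    ((integralHr d r n ⊓ (levi hrd.le ZHat).ker).map (parabolicZHatToA d r) :
      Set (GL (Fin (2 * d)) AQf)) = KNrSet d r n := by
  ext g
  rw [KNrSet, NrSet_eq_image_ker_levi hrd]
  constructor
  · rintro ⟨x, ⟨⟨hmod, -⟩, hlevi⟩, rfl⟩
    exact ⟨parabolicZHatToA_mem_KdA hmod, mapParabolic d r zhatToA x,
      (levi_mapParabolic_eq_one_iff hrd.le zhatToA_injective).2 hlevi, rfl⟩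
  · rintro ⟨hK, y, hy, rfl⟩
    obtain ⟨x, hmod, rfl⟩ := exists_mapParabolic_eq (Nat.zero_lt_of_lt hrd) hK
    have hlevi := (levi_mapParabolic_eq_one_iff hrd.le zhatToA_injective).1 hy
    exact ⟨x, ⟨⟨hmod, 1, (map_one _).trans (congrArg Prod.fst hlevi).symm⟩, hlevi⟩, rfl⟩

/-- The embedding of `Γ_{ℓ,r} × K_r` in the Levi quotient of `P_r(Ẑ)`. -/
def congruenceToLevi (d r : ℕ) (n : ℕ+) :
    GammaLr (d - r) n × KrP r n →* GL (Fin (d - r)) ZHat × GSpP r ZHat :=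
  ((glMap (Int.castRingHom ZHat)).comp (GammaLr (d - r) n).subtype).prodMap (KrP r n).subtype

lemma congruenceToLevi_injective : Function.Injective (congruenceToLevi d r n) :=
  ((glMap_injective intCast_ZHat_injective).comp Subtype.val_injective).prodMap
    Subtype.val_injective

lemma mem_KrP_iff {B : GSpP r ZHat} : B ∈ KrP r n ↔ mapGSpP r (projZHat n) B = 1 := by
  rw [Subtype.ext_iff]
  rfl

lemma mem_GammaLr_iff {m : ℕ} {C : GL (Fin m) ℤ} :
    C ∈ GammaLr m n ↔ glMap (projZHat n) (glMap (Int.castRingHom ZHat) C) = 1 := by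
  rw [glMap_glMap, RingHom.ext_int ((projZHat n).comp _) (Int.castRingHom (ZMod n))]
  rfl

lemma map_levi_integralHr (hrd : r ≤ d) :
    (integralHr d r n).map (levi hrd ZHat) = (congruenceToLevi d r n).range := by
  ext y
  constructor
  · rintro ⟨x, ⟨hmod, C, hC⟩, rfl⟩
    have hΓ : C ∈ GammaLr (d - r) n := by
      rw [mem_GammaLr_iff, hC, ← leviGL_mapParabolic, MonoidHom.mem_ker.1 hmod, map_one]
    have hK : leviGSp hrd ZHat x ∈ KrP r n := by
      rw [mem_KrP_iff, ← leviGSp_mapParabolic, MonoidHom.mem_ker.1 hmod, map_one]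
    exact ⟨(⟨C, hΓ⟩, ⟨_, hK⟩), Prod.ext hC rfl⟩
  · rintro ⟨⟨C, B⟩, rfl⟩
    have hlevi := levi_leviSection hrd (glMap (Int.castRingHom ZHat) C.1, B.1)
    refine ⟨leviSection hrd ZHat (glMap (Int.castRingHom ZHat) C.1, B.1),
      ⟨MonoidHom.mem_ker.2 ?_, C, (congrArg Prod.fst hlevi).symm⟩, hlevi⟩
    rw [mapParabolic_leviSection, mem_GammaLr_iff.1 C.2, mem_KrP_iff.1 B.2]
    exact map_one _

end CongruenceSubgroup

theorem Hr_decomposition_and_quotient_general {d r : ℕ} (hrd : r < d) (n : ℕ+) :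
    (∀ g : GL (Fin (2 * d)) AQf,
      g ∈ HrSet d r n ↔ ∃ a ∈ HlrSet d r n, ∃ b ∈ KQrSet d r n, g = a * b) ∧
    (∃ H KN : Subgroup (GL (Fin (2 * d)) AQf),
      (H : Set (GL (Fin (2 * d)) AQf)) = HrSet d r n ∧
      (KN : Set (GL (Fin (2 * d)) AQf)) = KNrSet d r n ∧
      KN ≤ H ∧
      ∃ ψ : ↥H →* (↥(GammaLr (d - r) n) × ↥(KrP r n)),
        Function.Surjective ψ ∧
        ∀ h : ↥H, (ψ h = 1 ↔ (h : GL (Fin (2 * d)) AQf) ∈ KN)) :=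
  ⟨fun _ => mem_HrSet_iff hrd, _, _, coe_map_integralHr hrd, coe_map_integralHr_inf_ker_levi hrd,
    Subgroup.map_mono inf_le_left,
    exists_surjective_of_map_eq_range (parabolicZHatToA_injective (Nat.zero_lt_of_lt hrd)) _
      congruenceToLevi_injective (map_levi_integralHr hrd.le)⟩

/-- (a) `H_r = H_{ℓ,r}·K_{Q,r}`; (b) `K_{N,r}` is a normal subgroup of `H_r`, and
`H_r/K_{N,r} ≅ Γ_{ℓ,r} × K_r`.  Part (b) is expressed by exhibiting `H_r` and `K_{N,r}` as
subgroups of `GL_{2d}(𝔸_f)` and a surjective group homomorphism `H_r → Γ_{ℓ,r} × K_r` whose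
kernel is exactly `K_{N,r}` (so `K_{N,r}` is normal in `H_r` and the quotient is
`Γ_{ℓ,r} × K_r` by the first isomorphism theorem). -/
theorem Hr_decomposition_and_quotient (d r n : ℕ) (hd : 1 ≤ d) (hr : r ≤ d - 1) (hn : 3 ≤ n) :
    (∀ g : GL (Fin (2 * d)) AQf,
      g ∈ HrSet d r ⟨n, by omega⟩ ↔
        ∃ a ∈ HlrSet d r ⟨n, by omega⟩, ∃ b ∈ KQrSet d r ⟨n, by omega⟩, g = a * b) ∧
    (∃ H KN : Subgroup (GL (Fin (2 * d)) AQf),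
      (H : Set (GL (Fin (2 * d)) AQf)) = HrSet d r ⟨n, by omega⟩ ∧
      (KN : Set (GL (Fin (2 * d)) AQf)) = KNrSet d r ⟨n, by omega⟩ ∧
      KN ≤ H ∧
      ∃ ψ : ↥H →* (↥(GammaLr (d - r) n) × ↥(KrP r ⟨n, by omega⟩)),
        Function.Surjective ψ ∧
        ∀ h : ↥H, (ψ h = 1 ↔ (h : GL (Fin (2 * d)) AQf) ∈ KN)) :=
  Hr_decomposition_and_quotient_general (by omega) ⟨n, by omega⟩
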